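/- For any partition λ, any n ≥ 1, and any partition ρ satisfying (λ_1) ⊆ ρ ⊆ λ̄^{(n)} (that is, ρ_1 ≥ λ_1 and ρ_i ≤ λ̄^{(n)}_i for all i), there exists a highest weight element T ∈ SVRPP^n(λ) with wt(T) = ρ. -/

import Mathlib

open scoped Classical

/-- A partition, given as its weakly decreasing sequence of parts (0-indexed),
with finitely many nonzero parts. -/
def IsPartitionFun (f : ℕ → ℕ) : Prop :=
  (∀ i, f (i + 1) ≤ f i) ∧ ∃ N, ∀ i, N ≤ i → f i = 0

/-- Box `(i, j)` (row `i`, column `j`, both 0-indexed) lies in the skew shape `lam/mu`. -/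
def InShape (lam mu : ℕ → ℕ) (i j : ℕ) : Prop :=
  mu i ≤ j ∧ j < lam i

/-- `A ≤ B` for finite sets of naturals: every element of `A` is at most every
element of `B` (for nonempty sets this says `max A ≤ min B`). -/
def FinsetLE (A B : Finset ℕ) : Prop :=
  ∀ a ∈ A, ∀ b ∈ B, a ≤ b

/-- A set-valued reverse plane partition of skew shape `lam/mu`: every box of the
shape is filled with a nonempty finite set of positive integers, the sets weakly
increase along rows and down columns, and boxes outside the shape are empty. -/
def IsSVRPP (lam mu : ℕ → ℕ) (T : ℕ → ℕ → Finset ℕ) : Prop :=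
  (∀ i j, ¬ InShape lam mu i j → T i j = ∅) ∧
  (∀ i j, InShape lam mu i j → (T i j).Nonempty) ∧
  (∀ i j x, x ∈ T i j → 1 ≤ x) ∧
  (∀ i j, InShape lam mu i j → InShape lam mu i (j + 1) → FinsetLE (T i j) (T i (j + 1))) ∧
  (∀ i j, InShape lam mu i j → InShape lam mu (i + 1) j → FinsetLE (T i j) (T (i + 1) j))

/-- An SVRPP all of whose entries are subsets of `{1, …, n}`. -/
def IsSVRPPn (lam mu : ℕ → ℕ) (n : ℕ) (T : ℕ → ℕ → Finset ℕ) : Prop :=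
  IsSVRPP lam mu T ∧ ∀ i j, T i j ⊆ Finset.Icc 1 n

/-- `ircont T v` = number of columns of `T` containing a set that contains `v`. -/
noncomputable def ircont (T : ℕ → ℕ → Finset ℕ) (v : ℕ) : ℕ :=
  Set.ncard {j : ℕ | ∃ i, v ∈ T i j}

/-- `ceq lam mu T i` = number of boxes `(i,j)` of the shape with `(i+1,j)` also in the
shape and `max T(i,j) = min T(i+1,j)`. -/
noncomputable def ceq (lam mu : ℕ → ℕ) (T : ℕ → ℕ → Finset ℕ) (i : ℕ) : ℕ :=
  Set.ncard {j : ℕ | InShape lam mu i j ∧ InShape lam mu (i + 1) j ∧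
    ∃ m, m ∈ T i j ∧ (∀ x ∈ T i j, x ≤ m) ∧ m ∈ T (i + 1) j ∧ ∀ x ∈ T (i + 1) j, m ≤ x}

/-- `exv lam mu T i` = excess of row `i`: the sum over the boxes of row `i` of
(cardinality of the filling minus one). -/
def exv (lam mu : ℕ → ℕ) (T : ℕ → ℕ → Finset ℕ) (i : ℕ) : ℕ :=
  ∑ j ∈ Finset.Ico (mu i) (lam i), ((T i j).card - 1)

/-! ### Two-letter fillings (letters `a` and `a+1`) and descent resolution -/

/-- Column `j` of the filling `S` contains the letter `x` somewhere. -/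
def ColHas (S : ℕ → ℕ → Finset ℕ) (j x : ℕ) : Prop := ∃ r, x ∈ S r j

/-- Column `j` is `a`-pure: it contains the letter `a` but not the letter `a+1`. -/
def ColPureA (a : ℕ) (S : ℕ → ℕ → Finset ℕ) (j : ℕ) : Prop :=
  ColHas S j a ∧ ¬ ColHas S j (a + 1)

/-- Column `j` is `(a+1)`-pure: it contains the letter `a+1` but not the letter `a`. -/
def ColPureB (a : ℕ) (S : ℕ → ℕ → Finset ℕ) (j : ℕ) : Prop :=
  ColHas S j (a + 1) ∧ ¬ ColHas S j a

/-- Column `j` is mixed: it contains both letters `a` and `a+1`. -/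
def ColMixed (a : ℕ) (S : ℕ → ℕ → Finset ℕ) (j : ℕ) : Prop :=
  ColHas S j a ∧ ColHas S j (a + 1)

/-- `sep a S j`: the smallest row index `r` with `a+1 ∈ S r j` (the transition row of a
mixed column). -/
noncomputable def sep (a : ℕ) (S : ℕ → ℕ → Finset ℕ) (j : ℕ) : ℕ :=
  sInf {r : ℕ | a + 1 ∈ S r j}

/-- `botA a S j`: the largest row index `r` with `a ∈ S r j` (the bottom-most box of
column `j` containing the letter `a`). -/
noncomputable def botA (a : ℕ) (S : ℕ → ℕ → Finset ℕ) (j : ℕ) : ℕ :=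
  sSup {r : ℕ | a ∈ S r j}

/-- `k` is a descent of `S`: in some row, a box whose maximum is `a+1` lies immediately
to the left of a box whose minimum is `a`. -/
def Descent (a : ℕ) (S : ℕ → ℕ → Finset ℕ) (k : ℕ) : Prop :=
  ∃ r, a + 1 ∈ S r k ∧ a ∈ S r (k + 1)

/-- The flip map: each entry of every `a`-pure column is replaced by `{a+1}`, each entry
of every `(a+1)`-pure column is replaced by `{a}`, and mixed columns stay unchanged. -/
noncomputable def flipT (a : ℕ) (S : ℕ → ℕ → Finset ℕ) : ℕ → ℕ → Finset ℕ :=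
  fun r j =>
    if ColPureA a S j then (S r j).image (fun _ => a + 1)
    else if ColPureB a S j then (S r j).image (fun _ => a)
    else S r j

/-- The descent-resolution operation `res_k` at columns `k, k+1`, implementing the
(M1), (2M) and (21) moves (with `a, a+1` playing the roles of `1, 2`). -/
noncomputable def resFun (a : ℕ) (S : ℕ → ℕ → Finset ℕ) (k : ℕ) : ℕ → ℕ → Finset ℕ :=
  fun r j =>
    if ColMixed a S k ∧ ColPureA a S (k + 1) then
      -- (M1): the transition row is `sep a S k`, the transition entry is `S (sep a S k) k`.
      (if j = k then (S r j).image (fun _ => a)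
       else if j = k + 1 then
         (if (S r j).Nonempty then
            (if r < sep a S k then {a}
             else if r = sep a S k then S r k
             else {a + 1})
          else ∅)
       else S r j)
    else if ColPureB a S k ∧ ColMixed a S (k + 1) then
      -- (2M): the transition row is `botA a S (k+1)`, the transition entry is
      -- `S (botA a S (k+1)) (k+1)`.
      (if j = k then
         (if (S r j).Nonempty then
            (if r < botA a S (k + 1) then {a}
             else if r = botA a S (k + 1) then S r (k + 1)
             else {a + 1})
          else ∅)
       else if j = k + 1 then (S r j).image (fun _ => a + 1)
       else S r j)
    else if ColPureB a S k ∧ ColPureA a S (k + 1) then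
      -- (21): the two columns swap purities.
      (if j = k then (S r j).image (fun _ => a)
       else if j = k + 1 then (S r j).image (fun _ => a + 1)
       else S r j)
    else S r j

/-- One descent-resolution step: `ResStep a S S'` holds when `S' = res_k S` for some
descent `k` of `S`. -/
def ResStep (a : ℕ) (S S' : ℕ → ℕ → Finset ℕ) : Prop :=
  ∃ k, Descent a S k ∧ S' = resFun a S k

/-! ### Crystal operators on set-valued reverse plane partitions -/

/-- The restriction `T^{(i)}` of a filling to the letters `i` and `i+1`: each box keeps
its intersection with `{i, i+1}`. -/
def restrictTwo (i : ℕ) (T : ℕ → ℕ → Finset ℕ) : ℕ → ℕ → Finset ℕ :=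
  fun r j => (T r j).filter (fun x => x = i ∨ x = i + 1)

/-- The complement of `T^{(i)}` inside `T`: each box keeps its letters other than
`i` and `i+1`. -/
def eraseTwo (i : ℕ) (T : ℕ → ℕ → Finset ℕ) : ℕ → ℕ → Finset ℕ :=
  fun r j => (T r j).filter (fun x => ¬ (x = i ∨ x = i + 1))

/-- Recombine a filling `T` with a new `{i, i+1}`-part `S`. -/
def mergeTwo (i : ℕ) (T S : ℕ → ℕ → Finset ℕ) : ℕ → ℕ → Finset ℕ :=
  fun r j => eraseTwo i T r j ∪ S r j

/-- In column `A`, replace every letter `i+1` by `i`. -/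
def raiseCol (i A : ℕ) (S : ℕ → ℕ → Finset ℕ) : ℕ → ℕ → Finset ℕ :=
  fun r j => if j = A then (S r j).image (fun x => if x = i + 1 then i else x) else S r j

/-- In column `A`, replace every letter `i` by `i+1`. -/
def lowerCol (i A : ℕ) (S : ℕ → ℕ → Finset ℕ) : ℕ → ℕ → Finset ℕ :=
  fun r j => if j = A then (S r j).image (fun x => if x = i then i + 1 else x) else S r j

/-- Suffix statistic of the `i`-signature: the number of `(i+1)`-pure columns `≥ p` minus
the number of `i`-pure columns `≥ p` (of `T^{(i)}`). -/
noncomputable def fsuffix (i : ℕ) (T : ℕ → ℕ → Finset ℕ) (p : ℕ) : ℤ :=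
  (Set.ncard {j : ℕ | p ≤ j ∧ ColPureB i (restrictTwo i T) j} : ℤ) -
  (Set.ncard {j : ℕ | p ≤ j ∧ ColPureA i (restrictTwo i T) j} : ℤ)

/-- Prefix statistic of the `i`-signature: the number of `i`-pure columns `≤ p` minus the
number of `(i+1)`-pure columns `≤ p` (of `T^{(i)}`). -/
noncomputable def gprefix (i : ℕ) (T : ℕ → ℕ → Finset ℕ) (p : ℕ) : ℤ :=
  (Set.ncard {j : ℕ | j ≤ p ∧ ColPureA i (restrictTwo i T) j} : ℤ) -
  (Set.ncard {j : ℕ | j ≤ p ∧ ColPureB i (restrictTwo i T) j} : ℤ)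

/-- Column `A` carries the leftmost uncancelled `−` of the reduced `i`-signature of `T`:
it is `(i+1)`-pure and is the largest maximizer of the suffix statistic. -/
def LeftmostUnpairedMinus (i : ℕ) (T : ℕ → ℕ → Finset ℕ) (A : ℕ) : Prop :=
  ColPureB i (restrictTwo i T) A ∧
  (∀ p, fsuffix i T p ≤ fsuffix i T A) ∧
  (∀ p, A < p → fsuffix i T p < fsuffix i T A)

/-- Column `A` carries the rightmost uncancelled `+` of the reduced `i`-signature of `T`:
it is `i`-pure and is the smallest maximizer of the prefix statistic. -/
def RightmostUnpairedPlus (i : ℕ) (T : ℕ → ℕ → Finset ℕ) (A : ℕ) : Prop :=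
  ColPureA i (restrictTwo i T) A ∧
  (∀ p, gprefix i T p ≤ gprefix i T A) ∧
  (∀ p, p < A → gprefix i T p < gprefix i T A)

/-- `ERel i T T'` : `T'` is obtained from `T` by the raising operator `e_i`: change all
`(i+1)`'s to `i`'s in the column of the leftmost uncancelled `−`, run the
descent-resolution algorithm on the `{i, i+1}`-part until no descent remains, and merge
the result back into `T`. -/
def ERel (i : ℕ) (T T' : ℕ → ℕ → Finset ℕ) : Prop :=
  ∃ A S', LeftmostUnpairedMinus i T A ∧
    Relation.ReflTransGen (ResStep i) (raiseCol i A (restrictTwo i T)) S' ∧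
    (∀ k, ¬ Descent i S' k) ∧
    T' = mergeTwo i T S'

/-- `FRel i T T'` : `T'` is obtained from `T` by the lowering operator `f_i`. -/
def FRel (i : ℕ) (T T' : ℕ → ℕ → Finset ℕ) : Prop :=
  ∃ A S', RightmostUnpairedPlus i T A ∧
    Relation.ReflTransGen (ResStep i) (lowerCol i A (restrictTwo i T)) S' ∧
    (∀ k, ¬ Descent i S' k) ∧
    T' = mergeTwo i T S'

/-- The raising crystal operator `e_i` (with value `none` playing the role of `0`). -/
noncomputable def eOp (i : ℕ) (T : ℕ → ℕ → Finset ℕ) : Option (ℕ → ℕ → Finset ℕ) :=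
  if h : ∃ T', ERel i T T' then some h.choose else none

/-- The lowering crystal operator `f_i` (with value `none` playing the role of `0`). -/
noncomputable def fOp (i : ℕ) (T : ℕ → ℕ → Finset ℕ) : Option (ℕ → ℕ → Finset ℕ) :=
  if h : ∃ T', FRel i T T' then some h.choose else none

/-! ### The partitions `λ^♭` and `λ̄^{(n)}` and the tableau `T_max` -/

/-- The strict partition `λ^♭` (1-indexed part `v` is `flatPart lam (v-1)`):
`λ^♭_1 = λ_1` and `λ^♭_i = max{0, min{λ^♭_{i−1} − 1, λ_i}}` for `i ≥ 2` (truncated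
subtraction realizes the `max{0, ·}`). -/
def flatPart (lam : ℕ → ℕ) : ℕ → ℕ
  | 0 => lam 0
  | i + 1 => min (flatPart lam i - 1) (lam (i + 1))

/-- `k` = number of positive parts of `λ^♭`. -/
noncomputable def kFlat (lam : ℕ → ℕ) : ℕ :=
  Set.ncard {i : ℕ | 0 < flatPart lam i}

/-- The partition `λ̄^{(n)}`, as a function of the 1-indexed part `v`:
`λ̄^{(n)}_v = λ^♭_v + v − 1` for `1 ≤ v ≤ min(n, k)`, `λ̄^{(n)}_v = k` for `k < v ≤ n`,
and `0` for `v > n`. -/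
noncomputable def barLam (lam : ℕ → ℕ) (n : ℕ) (v : ℕ) : ℕ :=
  if 1 ≤ v ∧ v ≤ n then
    (if v ≤ kFlat lam then flatPart lam (v - 1) + (v - 1) else kFlat lam)
  else 0

/-- The tableau `T_max ∈ SVRPP^n(lam)`: in 1-indexed coordinates `(i, j)`,
`T_max(i,j) = {i}` if `i ≤ n` and `j < λ^♭_i`; `T_max(i,j) = {i, …, n}` if `i ≤ n` and
`j = λ^♭_i`; and `T_max(i,j) = {n}` otherwise (internally rows `r` and columns `j` are
0-indexed, so `(i, j) = (r + 1, j + 1)`). -/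
noncomputable def Tmax (lam : ℕ → ℕ) (n : ℕ) : ℕ → ℕ → Finset ℕ :=
  fun r j =>
    if j < lam r then
      (if r + 1 ≤ n ∧ j + 1 < flatPart lam r then {r + 1}
       else if r + 1 ≤ n ∧ j + 1 = flatPart lam r then Finset.Icc (r + 1) n
       else {n})
    else ∅

/-!
Restrict `T_max` to the diagram of `λ^♭`. In this partial filling the letter `v` occurs in at least
`λ̄^{(n)}_v` columns, and every column containing `v + 1` also contains `v`. Erase each `v` from all
but the rightmost `ρ_v` of its columns, then fill every empty box of `λ` with the largest letter
above it. Filling changes no letter's set of columns, so the weight is `ρ`. The rows weakly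
increase because a letter of column `j` recurs in column `j + 1`, in the same row or higher, as long
as its row of `λ` reaches that far. Among the columns weakly to the right of any given one, `v`
occurs at least as often as `v + 1`, so every `-` of the `v`-signature cancels.
-/

section FiniteSets

variable {α : Type*} [LinearOrder α]

theorem exists_ncard_inter_Ici_eq [Nonempty α] [NoMaxOrder α] {S : Set α} (hS : S.Finite)
    {m : ℕ} (hm : m ≤ S.ncard) : ∃ q, (S ∩ Set.Ici q).ncard = m := by
  lift S to Finset α using hS
  rw [Set.ncard_coe_finset] at hm
  induction S using Finset.induction_on_max generalizing m with
  | empty => exact ⟨Classical.arbitrary α, by simpa [eq_comm] using hm⟩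
  | insert a S hlt ih =>
    have ha : a ∉ S := fun h => (hlt a h).false
    rw [Finset.card_insert_of_notMem ha] at hm
    rcases m with - | m
    · obtain ⟨q, hq⟩ := exists_gt a
      have hempty : (↑(insert a S) : Set α) ∩ Set.Ici q = ∅ := by
        rw [← Set.disjoint_iff_inter_eq_empty, Set.disjoint_right]
        intro x hqx hx
        rcases Finset.mem_insert.mp hx with rfl | hx
        exacts [hq.not_ge hqx, (hq.trans_le hqx).not_gt (hlt x hx)]
      exact ⟨q, by rw [hempty, Set.ncard_empty]⟩
    · obtain ⟨q, hq⟩ := ih (Nat.le_of_succ_le_succ hm)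
      have hinsert : (↑(insert a S) : Set α) ∩ Set.Ici (min q a) = insert a (↑S ∩ Set.Ici q) := by
        rw [Finset.coe_insert, Set.insert_inter_of_mem (Set.mem_Ici.mpr (min_le_right q a))]
        congr 1
        ext x
        refine and_congr_right fun hx => ?_
        simp only [Set.mem_Ici, min_le_iff, (hlt x hx).not_ge, or_false]
      refine ⟨min q a, ?_⟩
      rw [hinsert, Set.ncard_insert_of_notMem (fun h => ha h.1) (S.finite_toSet.inter_of_left _),
        hq]

theorem ncard_inter_Ici_inter_Ici_le {A B : Set α} (hA : A.Finite) (hBA : B ⊆ A) {a b : α}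
    (h : (B ∩ Set.Ici b).ncard ≤ (A ∩ Set.Ici a).ncard) (p : α) :
    (B ∩ Set.Ici b ∩ Set.Ici p).ncard ≤ (A ∩ Set.Ici a ∩ Set.Ici p).ncard := by
  rcases le_total a p with hap | hpa
  · refine Set.ncard_le_ncard ?_ ((hA.inter_of_left _).inter_of_left _)
    rintro j ⟨⟨hj, -⟩, hpj⟩
    exact ⟨⟨hBA hj, hap.trans hpj⟩, hpj⟩
  · rw [Set.inter_assoc A, Set.inter_eq_left.mpr (Set.Ici_subset_Ici.mpr hpa)]
    exact (Set.ncard_le_ncard Set.inter_subset_left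
      ((hA.subset hBA).inter_of_left _)).trans h

end FiniteSets

/-- The set of columns of the filling `T` that contain the letter `v`; its cardinality is
`ircont T v`. -/
def columnsWith (T : ℕ → ℕ → Finset ℕ) (v : ℕ) : Set ℕ := {j | ColHas T j v}

section Signature

variable {i : ℕ} {T : ℕ → ℕ → Finset ℕ}

theorem colHas_restrictTwo_left {j : ℕ} : ColHas (restrictTwo i T) j i ↔ ColHas T j i := by
  simp [ColHas, restrictTwo]

theorem colHas_restrictTwo_right {j : ℕ} :
    ColHas (restrictTwo i T) j (i + 1) ↔ ColHas T j (i + 1) := by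
  simp [ColHas, restrictTwo]

theorem fsuffix_eq_ncard_sdiff_sub (i : ℕ) (T : ℕ → ℕ → Finset ℕ) (p : ℕ) :
    fsuffix i T p =
      (((columnsWith T (i + 1) ∩ Set.Ici p) \ (columnsWith T i ∩ Set.Ici p)).ncard : ℤ) -
        ((columnsWith T i ∩ Set.Ici p) \ (columnsWith T (i + 1) ∩ Set.Ici p)).ncard := by
  unfold fsuffix ColPureA ColPureB
  congr 3 <;> ext j <;>
    simp only [colHas_restrictTwo_left, colHas_restrictTwo_right, columnsWith, Set.mem_ofPred_eq,
      Set.mem_sdiff, Set.mem_inter_iff, Set.mem_Ici] <;>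
    tauto

theorem exists_lt_fsuffix_nonneg (hfin : (columnsWith T i).Finite) (A : ℕ) :
    ∃ p, A < p ∧ 0 ≤ fsuffix i T p := by
  obtain ⟨M, hM⟩ := hfin.bddAbove
  have hempty : columnsWith T i ∩ Set.Ici (A + M + 1) = ∅ := by
    ext j
    simp only [Set.mem_inter_iff, Set.mem_Ici, Set.mem_empty_iff_false, iff_false, not_and]
    intro hj
    have := hM hj
    omega
  refine ⟨A + M + 1, by omega, ?_⟩
  simp [fsuffix_eq_ncard_sdiff_sub, hempty]

theorem eOp_eq_none_of_ncard_le (hfin : (columnsWith T i).Finite)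
    (hfin' : (columnsWith T (i + 1)).Finite)
    (h : ∀ p, (columnsWith T (i + 1) ∩ Set.Ici p).ncard ≤ (columnsWith T i ∩ Set.Ici p).ncard) :
    eOp i T = none := by
  have hnonpos (p : ℕ) : fsuffix i T p ≤ 0 := by
    rw [fsuffix_eq_ncard_sdiff_sub, sub_nonpos, Nat.cast_le]
    exact (Set.ncard_le_ncard_iff_ncard_sdiff_le_ncard_sdiff
      (hfin'.inter_of_left _) (hfin.inter_of_left _)).mp (h p)
  refine dif_neg ?_
  rintro ⟨-, A, -, ⟨-, -, hlast⟩, -⟩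
  obtain ⟨p, hAp, hp⟩ := exists_lt_fsuffix_nonneg hfin A
  exact (hp.trans_lt (hlast p hAp)).not_ge (hnonpos A)

end Signature

section FillDown

/-- The letters of column `j` of `X` in rows `0, …, r`. -/
def lettersAbove (X : ℕ → ℕ → Finset ℕ) (r j : ℕ) : Finset ℕ :=
  (Finset.range (r + 1)).biUnion fun s => X s j

/-- The filling of the shape `lam` that agrees with `X` on the boxes where `X` is nonempty and has
in every other box the largest letter of `X` above it in its column. A box without such a letter
stays empty. -/
noncomputable def fillDown (lam : ℕ → ℕ) (X : ℕ → ℕ → Finset ℕ) : ℕ → ℕ → Finset ℕ := fun r j =>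
  if j < lam r then
    if (X r j).Nonempty then X r j
    else {v ∈ lettersAbove X r j | ∀ w ∈ lettersAbove X r j, w ≤ v}
  else ∅

/-- A filling of some of the boxes of the shape `lam` that `fillDown` extends to an SVRPP as soon
as its top row is complete. Comparisons within a column skip over empty boxes, so they are required
between all rows rather than adjacent ones. -/
structure IsFillable (lam : ℕ → ℕ) (X : ℕ → ℕ → Finset ℕ) : Prop where
  lt_of_mem : ∀ {r j v}, v ∈ X r j → j < lam r
  col_le : ∀ {r s j}, r < s → FinsetLE (X r j) (X s j)
  row_le : ∀ {r s j}, r ≤ s → FinsetLE (X r j) (X s (j + 1))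
  exists_mem_right : ∀ {r j v}, v ∈ X r j → j + 1 < lam r → ∃ s ≤ r, v ∈ X s (j + 1)

/-- The filling `X` with each letter `v` erased from the columns to the left of column `q v`. -/
def eraseLeft (q : ℕ → ℕ) (X : ℕ → ℕ → Finset ℕ) : ℕ → ℕ → Finset ℕ := fun r j =>
  {v ∈ X r j | q v ≤ j}

variable {lam : ℕ → ℕ} {X : ℕ → ℕ → Finset ℕ} {r j v : ℕ}

theorem mem_lettersAbove : v ∈ lettersAbove X r j ↔ ∃ s ≤ r, v ∈ X s j := by
  simp [lettersAbove]

theorem fillDown_subset_lettersAbove : fillDown lam X r j ⊆ lettersAbove X r j := by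
  unfold fillDown
  split_ifs
  · exact fun v hv => mem_lettersAbove.mpr ⟨r, le_rfl, hv⟩
  · exact Finset.filter_subset _ _
  · exact Finset.empty_subset _

theorem subset_fillDown (h : j < lam r) : X r j ⊆ fillDown lam X r j := by
  intro v hv
  simpa only [fillDown, if_pos h, if_pos (show (X r j).Nonempty from ⟨v, hv⟩)] using hv

theorem mem_or_forall_le_of_mem_fillDown (hv : v ∈ fillDown lam X r j) :
    v ∈ X r j ∨ ∀ w ∈ lettersAbove X r j, w ≤ v := by
  unfold fillDown at hv
  split_ifs at hv
  · exact Or.inl hv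
  · exact Or.inr (Finset.mem_filter.mp hv).2
  · exact absurd hv (Finset.notMem_empty v)

theorem fillDown_nonempty (h : j < lam r) (hne : (lettersAbove X r j).Nonempty) :
    (fillDown lam X r j).Nonempty := by
  unfold fillDown
  split_ifs with hX
  · exact hX
  · exact ⟨_, Finset.mem_filter.mpr ⟨Finset.max'_mem _ hne, Finset.le_max' _⟩⟩

theorem columnsWith_eraseLeft (q : ℕ → ℕ) (X : ℕ → ℕ → Finset ℕ) (v : ℕ) :
    columnsWith (eraseLeft q X) v = columnsWith X v ∩ Set.Ici (q v) := by
  ext j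
  simp [columnsWith, ColHas, eraseLeft]

namespace IsFillable

theorem eraseLeft (hX : IsFillable lam X) (q : ℕ → ℕ) : IsFillable lam (eraseLeft q X) where
  lt_of_mem hv := hX.lt_of_mem (Finset.mem_filter.mp hv).1
  col_le hrs a ha b hb :=
    hX.col_le hrs a (Finset.mem_filter.mp ha).1 b (Finset.mem_filter.mp hb).1
  row_le hrs a ha b hb :=
    hX.row_le hrs a (Finset.mem_filter.mp ha).1 b (Finset.mem_filter.mp hb).1
  exists_mem_right hv hj := by
    obtain ⟨hv, hq⟩ := Finset.mem_filter.mp hv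
    obtain ⟨s, hs, hvs⟩ := hX.exists_mem_right hv hj
    exact ⟨s, hs, Finset.mem_filter.mpr ⟨hvs, Nat.le_succ_of_le hq⟩⟩

theorem columnsWith_fillDown (hX : IsFillable lam X) (v : ℕ) :
    columnsWith (fillDown lam X) v = columnsWith X v := by
  ext j
  constructor
  · rintro ⟨r, hr⟩
    obtain ⟨s, -, hs⟩ := mem_lettersAbove.mp (fillDown_subset_lettersAbove hr)
    exact ⟨s, hs⟩
  · rintro ⟨r, hr⟩
    exact ⟨r, subset_fillDown (hX.lt_of_mem hr) hr⟩

theorem fillDown_row_le (hX : IsFillable lam X) (hlam : Antitone lam) (hj : j + 1 < lam r) :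
    FinsetLE (fillDown lam X r j) (fillDown lam X r (j + 1)) := by
  intro a ha b hb
  obtain ⟨s, hsr, has⟩ := mem_lettersAbove.mp (fillDown_subset_lettersAbove ha)
  rcases mem_or_forall_le_of_mem_fillDown hb with hb | hmax
  · exact hX.row_le hsr a has b hb
  · obtain ⟨t, hts, hat⟩ := hX.exists_mem_right has (hj.trans_le (hlam hsr))
    exact hmax a (mem_lettersAbove.mpr ⟨t, hts.trans hsr, hat⟩)

theorem fillDown_col_le (hX : IsFillable lam X) :
    FinsetLE (fillDown lam X r j) (fillDown lam X (r + 1) j) := by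
  intro a ha b hb
  obtain ⟨s, hsr, has⟩ := mem_lettersAbove.mp (fillDown_subset_lettersAbove ha)
  rcases mem_or_forall_le_of_mem_fillDown hb with hb | hmax
  · exact hX.col_le (Nat.lt_succ_of_le hsr) a has b hb
  · exact hmax a (mem_lettersAbove.mpr ⟨s, Nat.le_succ_of_le hsr, has⟩)

theorem isSVRPPn_fillDown (hX : IsFillable lam X) (hlam : Antitone lam) {n : ℕ}
    (hn : ∀ r j, X r j ⊆ Finset.Icc 1 n) (htop : ∀ j < lam 0, (X 0 j).Nonempty) :
    IsSVRPPn lam (fun _ => 0) n (fillDown lam X) := by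
  have hsub (r j : ℕ) : fillDown lam X r j ⊆ Finset.Icc 1 n := by
    intro v hv
    obtain ⟨s, -, hs⟩ := mem_lettersAbove.mp (fillDown_subset_lettersAbove hv)
    exact hn s j hs
  refine ⟨⟨?outside, ?nonempty, ?pos, ?row, ?col⟩, hsub⟩
  case outside => exact fun r j h => if_neg fun hj => h ⟨Nat.zero_le j, hj⟩
  case nonempty =>
    rintro r j ⟨-, hj⟩
    obtain ⟨v, hv⟩ := htop j (hj.trans_le (hlam (Nat.zero_le r)))
    exact fillDown_nonempty hj ⟨v, mem_lettersAbove.mpr ⟨0, Nat.zero_le r, hv⟩⟩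
  case pos => exact fun r j v hv => (Finset.mem_Icc.mp (hsub r j hv)).1
  case row => exact fun r j _ h => hX.fillDown_row_le hlam h.2
  case col => exact fun r j _ _ => hX.fillDown_col_le

end IsFillable

end FillDown

section FlatPart

variable (lam : ℕ → ℕ)

theorem flatPart_le (r : ℕ) : flatPart lam r ≤ lam r := by
  cases r with
  | zero => exact le_rfl
  | succ r => exact min_le_right _ _

theorem flatPart_succ_le (r : ℕ) : flatPart lam (r + 1) ≤ flatPart lam r - 1 :=
  min_le_left _ _

theorem antitone_flatPart : Antitone (flatPart lam) :=
  antitone_nat_of_succ_le fun r => (flatPart_succ_le lam r).trans (Nat.sub_le _ _)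

variable {lam}

theorem flatPart_lt_of_lt {r s : ℕ} (hrs : r < s) (hr : 0 < flatPart lam r) :
    flatPart lam s < flatPart lam r := by
  have := (antitone_flatPart lam (Nat.succ_le_of_lt hrs)).trans (flatPart_succ_le lam r)
  omega

theorem flatPart_eq_add_two {r j : ℕ} (h : flatPart lam (r + 1) = j + 1)
    (hj : j + 1 < lam (r + 1)) : flatPart lam r = j + 2 := by
  rw [flatPart] at h
  omega

theorem flatPart_pos_of_lt_kFlat {r : ℕ} (hr : r < kFlat lam) : 0 < flatPart lam r := by
  by_contra! hzero
  have hsub : {i | 0 < flatPart lam i} ⊆ Set.Iio r := by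
    intro i (hi : 0 < flatPart lam i)
    by_contra! hri
    exact hi.not_ge ((antitone_flatPart lam (not_lt.mp hri)).trans hzero)
  have hle : kFlat lam ≤ r := by
    simpa only [kFlat, Set.ncard_Iio_nat] using Set.ncard_le_ncard hsub (Set.finite_Iio r)
  exact hr.not_ge hle

theorem strictAntiOn_flatPart_sub_one :
    StrictAntiOn (fun r => flatPart lam r - 1) (Set.Iio (kFlat lam)) := by
  intro r _ s hs hrs
  have hpos : 0 < flatPart lam s := flatPart_pos_of_lt_kFlat hs
  have hlt := flatPart_lt_of_lt hrs (hpos.trans_le (antitone_flatPart lam hrs.le))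
  change flatPart lam s - 1 < flatPart lam r - 1
  omega

end FlatPart

section FlatFilling

/-- The part of `Tmax lam n` inside the diagram of `flatPart lam`: row `r` carries the letter
`r + 1`, except that its last box carries `r + 1, …, n`. -/
def flatFilling (lam : ℕ → ℕ) (n : ℕ) : ℕ → ℕ → Finset ℕ := fun r j =>
  {v ∈ Finset.Icc (r + 1) n | j < flatPart lam r ∧ (v = r + 1 ∨ flatPart lam r = j + 1)}

variable {lam : ℕ → ℕ} {n r j v : ℕ}

theorem mem_flatFilling : v ∈ flatFilling lam n r j ↔
    (r + 1 ≤ v ∧ v ≤ n) ∧ j < flatPart lam r ∧ (v = r + 1 ∨ flatPart lam r = j + 1) := by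
  simp only [flatFilling, Finset.mem_filter, Finset.mem_Icc]

theorem flatFilling_subset_Icc (r j : ℕ) : flatFilling lam n r j ⊆ Finset.Icc 1 n :=
  (Finset.filter_subset _ _).trans (Finset.Icc_subset_Icc_left (Nat.le_add_left 1 r))

theorem isFillable_flatFilling (lam : ℕ → ℕ) (n : ℕ) : IsFillable lam (flatFilling lam n) where
  lt_of_mem {r _ _} hv := (mem_flatFilling.mp hv).2.1.trans_le (flatPart_le lam r)
  col_le {r s j} hrs a ha b hb := by
    rw [mem_flatFilling] at ha hb
    have := flatPart_lt_of_lt hrs (Nat.zero_lt_of_lt ha.2.1)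
    omega
  row_le {r s j} hrs a ha b hb := by
    rw [mem_flatFilling] at ha hb
    have := antitone_flatPart lam hrs
    omega
  exists_mem_right {r j v} hv hj := by
    obtain ⟨hvn, hjr, hcorner⟩ := mem_flatFilling.mp hv
    rcases (Nat.succ_le_of_lt hjr).lt_or_eq with hlt | heq
    · exact ⟨r, le_rfl, mem_flatFilling.mpr ⟨hvn, hlt, by omega⟩⟩
    cases r with
    | zero => exact absurd heq hj.ne
    | succ r =>
      have habove := flatPart_eq_add_two heq.symm hj
      exact ⟨r, Nat.le_succ r, mem_flatFilling.mpr ⟨by omega, by omega, Or.inr habove⟩⟩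

theorem columnsWith_flatFilling_subset (lam : ℕ → ℕ) (n v : ℕ) :
    columnsWith (flatFilling lam n) v ⊆ Set.Iio (lam 0) := by
  rintro j ⟨r, hr⟩
  exact (mem_flatFilling.mp hr).2.1.trans_le (antitone_flatPart lam (Nat.zero_le r))

theorem finite_columnsWith_flatFilling (lam : ℕ → ℕ) (n v : ℕ) :
    (columnsWith (flatFilling lam n) v).Finite :=
  (Set.finite_Iio _).subset (columnsWith_flatFilling_subset lam n v)

theorem columnsWith_flatFilling_succ_subset (hv : 1 ≤ v) :
    columnsWith (flatFilling lam n) (v + 1) ⊆ columnsWith (flatFilling lam n) v := by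
  rintro j ⟨r, hr⟩
  obtain ⟨hvn, hjr, hcorner⟩ := mem_flatFilling.mp hr
  rcases hvn.1.lt_or_eq with hrv | hrv
  · exact ⟨r, mem_flatFilling.mpr ⟨by omega, hjr, by omega⟩⟩
  · obtain ⟨s, rfl⟩ := Nat.exists_eq_add_of_le' (show 1 ≤ r by omega)
    have hjs := hjr.trans_le (antitone_flatPart lam (Nat.le_succ s))
    exact ⟨s, mem_flatFilling.mpr ⟨by omega, hjs, by omega⟩⟩

theorem Iio_union_image_subset_columnsWith_flatFilling (hv : 1 ≤ v) (hvn : v ≤ n) :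
    Set.Iio (flatPart lam (v - 1)) ∪
        (fun s => flatPart lam s - 1) '' Set.Iio (min (v - 1) (kFlat lam)) ⊆
      columnsWith (flatFilling lam n) v := by
  rintro j (hj | ⟨s, hs, rfl⟩)
  · exact ⟨v - 1, mem_flatFilling.mpr ⟨by omega, hj, by omega⟩⟩
  · obtain ⟨hsv, hsk⟩ := lt_min_iff.mp (Set.mem_Iio.mp hs)
    have hpos := flatPart_pos_of_lt_kFlat hsk
    exact ⟨s, mem_flatFilling.mpr ⟨by omega, Nat.sub_one_lt hpos.ne',
      Or.inr (Nat.sub_add_cancel hpos).symm⟩⟩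

theorem barLam_le_ncard_columnsWith_flatFilling (lam : ℕ → ℕ) (n v : ℕ) :
    barLam lam n v ≤ (columnsWith (flatFilling lam n) v).ncard := by
  by_cases hv : 1 ≤ v ∧ v ≤ n
  swap
  · simp only [barLam, if_neg hv, Nat.zero_le]
  set m := min (v - 1) (kFlat lam)
  have hdisj : Disjoint (Set.Iio (flatPart lam (v - 1)))
      ((fun s => flatPart lam s - 1) '' Set.Iio m) := by
    rw [Set.disjoint_right]
    rintro _ ⟨s, hs, rfl⟩ hlt
    obtain ⟨hsv, hsk⟩ := lt_min_iff.mp (Set.mem_Iio.mp hs)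
    have := flatPart_lt_of_lt hsv (flatPart_pos_of_lt_kFlat hsk)
    exact (Nat.le_sub_one_of_lt this).not_gt hlt
  have hinj : Set.InjOn (fun s => flatPart lam s - 1) (Set.Iio m) :=
    (strictAntiOn_flatPart_sub_one.mono (Set.Iio_subset_Iio (min_le_right _ _))).injOn
  calc barLam lam n v ≤ flatPart lam (v - 1) + m := by
        rw [barLam, if_pos hv]
        split_ifs <;> omega
    _ = (Set.Iio (flatPart lam (v - 1)) ∪ (fun s => flatPart lam s - 1) '' Set.Iio m).ncard := by
        rw [Set.ncard_union_eq hdisj (Set.finite_Iio _) ((Set.finite_Iio _).image _),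
          hinj.ncard_image, Set.ncard_Iio_nat, Set.ncard_Iio_nat]
    _ ≤ (columnsWith (flatFilling lam n) v).ncard :=
        Set.ncard_le_ncard (Iio_union_image_subset_columnsWith_flatFilling hv.1 hv.2)
          (finite_columnsWith_flatFilling lam n v)

theorem eraseLeft_flatFilling_zero_nonempty {q : ℕ → ℕ}
    (h : lam 0 ≤ (columnsWith (flatFilling lam n) 1 ∩ Set.Ici (q 1)).ncard) (hj : j < lam 0) :
    (eraseLeft q (flatFilling lam n) 0 j).Nonempty := by
  have heq : columnsWith (flatFilling lam n) 1 ∩ Set.Ici (q 1) = Set.Iio (lam 0) :=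
    Set.eq_of_subset_of_ncard_le
      (Set.inter_subset_left.trans (columnsWith_flatFilling_subset lam n 1))
      (by rwa [Set.ncard_Iio_nat]) (Set.finite_Iio _)
  obtain ⟨⟨r, hr⟩, hq⟩ := heq.ge hj
  obtain rfl : r = 0 := by have := (mem_flatFilling.mp hr).1.1; omega
  exact ⟨1, Finset.mem_filter.mpr ⟨hr, hq⟩⟩

end FlatFilling

theorem exists_highest_weight_of_between_general {lam : ℕ → ℕ} (hlam : Antitone lam) {n : ℕ}
    {ρ : ℕ → ℕ} (hρdec : ∀ v, 1 ≤ v → ρ (v + 1) ≤ ρ v) (hlow : lam 0 ≤ ρ 1)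
    (hhigh : ∀ v, ρ v ≤ barLam lam n v) :
    ∃ T : ℕ → ℕ → Finset ℕ,
      IsSVRPPn lam (fun _ => 0) n T ∧
      (∀ i, 1 ≤ i → eOp i T = none) ∧
      (∀ v, ircont T v = ρ v) := by
  have hfin := finite_columnsWith_flatFilling lam n
  choose q hq using fun v => exists_ncard_inter_Ici_eq (hfin v)
    ((hhigh v).trans (barLam_le_ncard_columnsWith_flatFilling lam n v))
  have hX := (isFillable_flatFilling lam n).eraseLeft q
  have hcol (v : ℕ) : columnsWith (fillDown lam (eraseLeft q (flatFilling lam n))) v =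
      columnsWith (flatFilling lam n) v ∩ Set.Ici (q v) := by
    rw [hX.columnsWith_fillDown, columnsWith_eraseLeft]
  refine ⟨_, hX.isSVRPPn_fillDown hlam ?_ ?_, fun i hi => ?_, fun v => ?_⟩
  · exact fun r j => (Finset.filter_subset _ _).trans (flatFilling_subset_Icc r j)
  · exact fun j => eraseLeft_flatFilling_zero_nonempty (hlow.trans_eq (hq 1).symm)
  · refine eOp_eq_none_of_ncard_le ?_ ?_ fun p => ?_
    · exact hcol i ▸ (hfin i).inter_of_left _
    · exact hcol (i + 1) ▸ (hfin (i + 1)).inter_of_left _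
    · rw [hcol, hcol]
      refine ncard_inter_Ici_inter_Ici_le (hfin i) (columnsWith_flatFilling_succ_subset hi) ?_ p
      rw [hq, hq]
      exact hρdec i hi
  · exact (congrArg Set.ncard (hcol v)).trans (hq v)

/-- For any partition `lam`, any `n ≥ 1` and any partition `ρ` with
`(λ_1) ⊆ ρ ⊆ λ̄^{(n)}` (i.e. `ρ_1 ≥ λ_1` and `ρ_v ≤ λ̄^{(n)}_v` for all `v`), there is a
highest weight element `T ∈ SVRPP^n(lam)` with `wt(T) = ρ`. (Parts of `ρ` are 1-indexed;
`ρ 0 = 0` by convention.) -/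
theorem exists_highest_weight_of_between (lam : ℕ → ℕ) (hlam : IsPartitionFun lam)
    (n : ℕ) (hn : 1 ≤ n) (ρ : ℕ → ℕ)
    (hρ0 : ρ 0 = 0) (hρdec : ∀ v, 1 ≤ v → ρ (v + 1) ≤ ρ v)
    (hlow : lam 0 ≤ ρ 1) (hhigh : ∀ v, ρ v ≤ barLam lam n v) :
    ∃ T : ℕ → ℕ → Finset ℕ,
      IsSVRPPn lam (fun _ => 0) n T ∧
      (∀ i, 1 ≤ i → i < n → eOp i T = none) ∧
      (∀ v, ircont T v = ρ v) := by
  obtain ⟨T, hT, hhw, hwt⟩ := exists_highest_weight_of_between_general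
    (antitone_nat_of_succ_le hlam.1) hρdec hlow hhigh
  exact ⟨T, hT, fun i hi _ => hhw i hi, hwt⟩
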